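/- Suppose that R(z) is invertible for every z in an open annulus containing the unit circle 𝕋, and that R admits a right canonical Wiener–Hopf factorization. Then there exists a stabilizing solution Q ∈ B(X₊, X₋) of the Riccati equation (R1). -/

import Mathlib

open Metric ContinuousLinearMap

noncomputable section

variable {U Xp Xm : Type*}
  [NormedAddCommGroup U] [InnerProductSpace ℂ U] [CompleteSpace U]
  [NormedAddCommGroup Xp] [InnerProductSpace ℂ Xp] [CompleteSpace Xp]
  [NormedAddCommGroup Xm] [InnerProductSpace ℂ Xm] [CompleteSpace Xm]

/-- The stable representation
`R(z) = δ + z·γ₊(I − zα₊)⁻¹β₊ + γ₋(zI − α₋)⁻¹β₋`. -/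
def Rfun (δ : U →L[ℂ] U) (γp : Xp →L[ℂ] U) (αp : Xp →L[ℂ] Xp) (βp : U →L[ℂ] Xp)
    (γm : Xm →L[ℂ] U) (αm : Xm →L[ℂ] Xm) (βm : U →L[ℂ] Xm) (z : ℂ) : U →L[ℂ] U :=
  δ + z • ((γp ∘L Ring.inverse (1 - z • αp)) ∘L βp) +
    (γm ∘L Ring.inverse (z • (1 : Xm →L[ℂ] Xm) - αm)) ∘L βm

/-- `Q` solves the Riccati equation (R1):
`δ − γ₋Qβ₊` is invertible and
`Q = α₋Qα₊ + (β₋ − α₋Qβ₊)(δ − γ₋Qβ₊)⁻¹(γ₊ − γ₋Qα₊)`. -/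
def SolvesR1 (δ : U →L[ℂ] U) (γp : Xp →L[ℂ] U) (αp : Xp →L[ℂ] Xp) (βp : U →L[ℂ] Xp)
    (γm : Xm →L[ℂ] U) (αm : Xm →L[ℂ] Xm) (βm : U →L[ℂ] Xm) (Q : Xp →L[ℂ] Xm) : Prop :=
  IsUnit (δ - (γm ∘L Q) ∘L βp) ∧
    Q = (αm ∘L Q) ∘L αp +
      ((βm - (αm ∘L Q) ∘L βp) ∘L Ring.inverse (δ - (γm ∘L Q) ∘L βp)) ∘L
        (γp - (γm ∘L Q) ∘L αp)

/-- The operator `α₊° := α₊ − β₊(δ − γ₋Qβ₊)⁻¹(γ₊ − γ₋Qα₊)`. -/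
def alphaPcirc (δ : U →L[ℂ] U) (γp : Xp →L[ℂ] U) (αp : Xp →L[ℂ] Xp) (βp : U →L[ℂ] Xp)
    (γm : Xm →L[ℂ] U) (Q : Xp →L[ℂ] Xm) : Xp →L[ℂ] Xp :=
  αp - (βp ∘L Ring.inverse (δ - (γm ∘L Q) ∘L βp)) ∘L (γp - (γm ∘L Q) ∘L αp)

/-- The operator `α₋° := α₋ − (β₋ − α₋Qβ₊)(δ − γ₋Qβ₊)⁻¹γ₋`. -/
def alphaMcirc (δ : U →L[ℂ] U) (βp : U →L[ℂ] Xp) (γm : Xm →L[ℂ] U) (αm : Xm →L[ℂ] Xm)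
    (βm : U →L[ℂ] Xm) (Q : Xp →L[ℂ] Xm) : Xm →L[ℂ] Xm :=
  αm - ((βm - (αm ∘L Q) ∘L βp) ∘L Ring.inverse (δ - (γm ∘L Q) ∘L βp)) ∘L γm

/-- A solution `Q` of (R1) is stabilizing if `α₊°` and `α₋°` have spectrum contained in
the open unit disc. -/
def StabilizingR1 (δ : U →L[ℂ] U) (γp : Xp →L[ℂ] U) (αp : Xp →L[ℂ] Xp) (βp : U →L[ℂ] Xp)
    (γm : Xm →L[ℂ] U) (αm : Xm →L[ℂ] Xm) (βm : U →L[ℂ] Xm) (Q : Xp →L[ℂ] Xm) : Prop :=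
  spectrum ℂ (alphaPcirc δ γp αp βp γm Q) ⊆ ball (0 : ℂ) 1 ∧
    spectrum ℂ (alphaMcirc δ βp γm αm βm Q) ⊆ ball (0 : ℂ) 1

/-- A `B(U)`-valued function of "plus type": analytic on an open neighborhood of the
closed unit disc, with invertible values and analytic pointwise inverse there. -/
def PlusFactor {E : Type*} [NormedAddCommGroup E] [InnerProductSpace ℂ E] [CompleteSpace E]
    (V : ℂ → (E →L[ℂ] E)) : Prop :=
  ∃ S : Set ℂ, IsOpen S ∧ closedBall (0 : ℂ) 1 ⊆ S ∧
    AnalyticOnNhd ℂ V S ∧ (∀ z ∈ S, IsUnit (V z)) ∧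
    AnalyticOnNhd ℂ (fun z => Ring.inverse (V z)) S

/-- A `B(U)`-valued function of "minus type" on the complement of the open unit disc:
`z ↦ V(1/z)` (with the value at `0` corresponding to `V(∞)`) extends to a function
that is analytic on an open neighborhood of the closed unit disc, with invertible
values and analytic pointwise inverse there. -/
def MinusFactor {E : Type*} [NormedAddCommGroup E] [InnerProductSpace ℂ E] [CompleteSpace E]
    (V : ℂ → (E →L[ℂ] E)) : Prop :=
  ∃ Vhat : ℂ → (E →L[ℂ] E), PlusFactor Vhat ∧ ∀ z : ℂ, 1 ≤ ‖z‖ → V z = Vhat z⁻¹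

/-- A right canonical Wiener–Hopf factorization `R(z) = V₋(z)V₊(z)` on the unit circle. -/
def RightCanonicalWH {E : Type*} [NormedAddCommGroup E] [InnerProductSpace ℂ E]
    [CompleteSpace E] (R : ℂ → (E →L[ℂ] E)) : Prop :=
  ∃ Vm Vp : ℂ → (E →L[ℂ] E), MinusFactor Vm ∧ PlusFactor Vp ∧
    ∀ z : ℂ, ‖z‖ = 1 → R z = Vm z * Vp z

/-- A left canonical Wiener–Hopf factorization `R(z) = W₊(z)W₋(z)` on the unit circle. -/
def LeftCanonicalWH {E : Type*} [NormedAddCommGroup E] [InnerProductSpace ℂ E]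
    [CompleteSpace E] (R : ℂ → (E →L[ℂ] E)) : Prop :=
  ∃ Wp Wm : ℂ → (E →L[ℂ] E), PlusFactor Wp ∧ MinusFactor Wm ∧
    ∀ z : ℂ, ‖z‖ = 1 → R z = Wp z * Wm z

/-- A Liouville theorem on the Riemann sphere: if `f` is differentiable on the closed unit
disc and agrees on the unit circle with `z ↦ g z⁻¹`, where `g` is differentiable on the closed unit
disc too, then `f` is constant. -/
theorem eqOn_closedBall_of_eq_inv_on_sphere {E : Type*} [NormedAddCommGroup E] [NormedSpace ℂ E]
    [CompleteSpace E] {f g : ℂ → E} (hf : DifferentiableOn ℂ f (closedBall 0 1))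
    (hg : DifferentiableOn ℂ g (closedBall 0 1)) (h : ∀ z : ℂ, ‖z‖ = 1 → f z = g z⁻¹) :
    ∀ z ∈ closedBall (0 : ℂ) 1, f z = g 0 := by
  have hball : ∀ w ∈ ball (0 : ℂ) 1, f w = g 0 := by
    intro w hw
    have hw' : ‖w‖ < 1 := by simpa using hw
    have hne : ∀ z ∈ closedBall (0 : ℂ) 1, 1 - w * z ≠ 0 := by
      intro z hz h0
      have hz' : ‖z‖ ≤ 1 := by simpa using hz
      have h1 : ‖w * z‖ = 1 := by rw [← sub_eq_zero.1 h0, norm_one]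
      rw [norm_mul] at h1
      nlinarith [norm_nonneg w, norm_nonneg z]
    have hG : DifferentiableOn ℂ (fun z => (1 - w * z)⁻¹ • g z) (closedBall 0 1) :=
      DifferentiableOn.smul (DifferentiableOn.inv (by fun_prop) hne) hg
    have e1 := DiffContOnCl.circleAverage_smul_div (R := 1) (w := w) (c := 0)
      (hf.mono (by simpa using closure_ball_subset_closedBall)).diffContOnCl (by simpa using hw)
    have e2 := DiffContOnCl.circleAverage (R := 1) (c := 0)
      (hG.mono (by simpa using closure_ball_subset_closedBall)).diffContOnCl
    rw [← Real.circleAverage_zero_one_congr_inv] at e2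
    rw [← e1]
    simp only [mul_zero, sub_zero, inv_one, one_smul] at e2
    rw [← e2]
    refine Real.circleAverage_congr_sphere fun z hz => ?_
    have hz1 : ‖z‖ = 1 := by simpa using hz
    have hz0 : z ≠ 0 := by rintro rfl; simp at hz1
    simp only [sub_zero, h z hz1]
    congr 1
    have : z - w ≠ 0 := by
      intro h0; rw [sub_eq_zero.1 h0] at hz1; exact hw'.ne hz1
    have h3 : 1 - w * z⁻¹ ≠ 0 := hne _ (by simp [hz1])
    field_simp
  have hcl : closure (ball (0 : ℂ) 1) = closedBall 0 1 := closure_ball _ one_ne_zero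
  intro z hz
  exact Set.EqOn.of_subset_closure (s := ball (0 : ℂ) 1) (t := closedBall 0 1) hball
    hf.continuousOn continuousOn_const ball_subset_closedBall hcl.ge hz

theorem spectrum_subset_ball_iff {E : Type*} [NormedAddCommGroup E] [NormedSpace ℂ E]
    {a : E →L[ℂ] E} :
    spectrum ℂ a ⊆ ball 0 1 ↔ ∀ w ∈ closedBall (0 : ℂ) 1, IsUnit (1 - w • a) := by
  have key : ∀ w : ℂ, w ≠ 0 → (IsUnit (1 - w • a) ↔ w⁻¹ ∉ spectrum ℂ a) := by
    intro w hw
    have e : 1 - w • a = Units.mk0 w hw • (algebraMap ℂ (E →L[ℂ] E) w⁻¹ - a) := by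
      rw [Units.smul_mk0, smul_sub, Algebra.algebraMap_eq_smul_one, smul_inv_smul₀ hw]
    rw [spectrum.notMem_iff, e, isUnit_smul_iff]
  constructor
  · intro h w hw
    by_cases hw0 : w = 0
    · simp [hw0]
    rw [key w hw0]
    intro hm
    have h1 := h hm
    have hw1 : ‖w‖ ≤ 1 := by simpa using hw
    have h2 := (one_le_inv₀ (norm_pos_iff.2 hw0)).2 hw1
    simp at h1
    linarith
  · intro h z hz
    by_contra hzb
    have hz1 : 1 ≤ ‖z‖ := by simpa using hzb
    have hz0 : z ≠ 0 := by rintro rfl; simp at hz1; linarith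
    have := (key z⁻¹ (inv_ne_zero hz0)).1 (h _ (by simpa using inv_le_one_of_one_le₀ hz1))
    rw [inv_inv] at this
    exact this hz

theorem isUnit_one_sub_comp_swap {E F : Type*} [NormedAddCommGroup E] [NormedSpace ℂ E]
    [NormedAddCommGroup F] [NormedSpace ℂ F] {a : E →L[ℂ] F} {b : F →L[ℂ] E}
    (h : IsUnit (1 - a ∘L b)) : IsUnit (1 - b ∘L a) := by
  obtain ⟨x, hx1, hx2⟩ := isUnit_iff_exists.1 h
  refine isUnit_iff_exists.2 ⟨1 + b ∘L x ∘L a, ?_, ?_⟩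
  · ext v
    have := congr(b ($hx1 (a v)))
    simp at this ⊢
    linear_combination (norm := module) this
  · ext v
    have := congr(b ($hx2 (a v)))
    simp at this ⊢
    linear_combination (norm := module) this

theorem analyticOnNhd_inverse_one_sub_smul {E : Type*} [NormedAddCommGroup E] [NormedSpace ℂ E]
    [CompleteSpace E] {T : E →L[ℂ] E} {S : Set ℂ} (hT : ∀ w ∈ S, IsUnit (1 - w • T)) :
    AnalyticOnNhd ℂ (fun w : ℂ => Ring.inverse (1 - w • T)) S := by
  intro w hw
  obtain ⟨u, hu⟩ := hT w hw
  have h1 : AnalyticAt ℂ (Ring.inverse : (E →L[ℂ] E) → _) (1 - w • T) :=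
    hu ▸ analyticAt_inverse u
  exact h1.comp (f := fun w : ℂ => 1 - w • T)
    (analyticAt_const.sub (analyticAt_id.smul analyticAt_const))

theorem inverse_one_sub_smul_left {E : Type*} [NormedAddCommGroup E] [NormedSpace ℂ E]
    {T : E →L[ℂ] E} {w : ℂ} (h : IsUnit (1 - w • T)) (x : E) :
    Ring.inverse (1 - w • T) x - w • Ring.inverse (1 - w • T) (T x) = x := by
  simpa using congr($(Ring.inverse_mul_cancel _ h) x)

theorem inverse_one_sub_smul_right {E : Type*} [NormedAddCommGroup E] [NormedSpace ℂ E]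
    {T : E →L[ℂ] E} {w : ℂ} (h : IsUnit (1 - w • T)) (x : E) :
    Ring.inverse (1 - w • T) x - w • T (Ring.inverse (1 - w • T) x) = x := by
  simpa using congr($(Ring.mul_inverse_cancel _ h) x)

theorem ContinuousLinearMap.map_circleIntegral {E F : Type*} [NormedAddCommGroup E]
    [NormedSpace ℂ E] [CompleteSpace E] [NormedAddCommGroup F] [NormedSpace ℂ F] [CompleteSpace F]
    (T : E →L[ℂ] F) {f : ℂ → E} {c : ℂ} {r : ℝ} (hf : CircleIntegrable f c r) :
    T (∮ z in C(c, r), f z) = ∮ z in C(c, r), T (f z) := by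
  simp only [circleIntegral, ← map_smul]
  exact (T.intervalIntegral_comp_comm hf.out).symm

/-- Division with remainder by `z - T` for functions analytic on the closed unit disc, where the
spectrum of `T` lies in the open unit disc. -/
theorem exists_division {E : Type*} [NormedAddCommGroup E] [NormedSpace ℂ E]
    [CompleteSpace E] {T : E →L[ℂ] E} (hT : ∀ w ∈ closedBall (0 : ℂ) 1, IsUnit (1 - w • T))
    {f : ℂ → E} (hf : AnalyticOnNhd ℂ f (closedBall 0 1)) :
    ∃ (q : E) (k : ℂ → E), DifferentiableOn ℂ k (closedBall 0 1) ∧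
      ∀ z ∈ closedBall (0 : ℂ) 1, z • k z - T (k z) = f z - q := by
  obtain ⟨ε, hε, hsub⟩ := (isCompact_closedBall (0 : ℂ) 1).exists_cthickening_subset_open
    (isOpen_analyticAt ℂ f) hf
  rw [cthickening_closedBall hε.le zero_le_one] at hsub
  obtain ⟨r, hr⟩ : ∃ r : NNReal, (r : ℝ) = ε + 1 := ⟨⟨ε + 1, by positivity⟩, rfl⟩
  rw [← hr] at hsub
  have hr1 : (1 : ℝ) < r := by linarith
  have hinv : Set.MapsTo (fun z : ℂ => z⁻¹) (sphere 0 r) (closedBall 0 1) := by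
    intro z hz
    have hz : ‖z‖ = r := by simpa using hz
    simpa [hz] using inv_le_one_of_one_le₀ hr1.le
  have hne : ∀ z ∈ sphere (0 : ℂ) r, z ≠ 0 := by
    rintro z hz rfl
    have : (0 : ℝ) = r := by simpa using hz
    linarith
  have hfr : DifferentiableOn ℂ f (closedBall 0 r) := fun z hz =>
    (hsub hz).differentiableAt.differentiableWithinAt
  set φ : ℂ → E := fun z => z⁻¹ • Ring.inverse (1 - z⁻¹ • T) (f z) with hφ
  have hφc : ContinuousOn φ (sphere 0 r) := by
    have h0 : ContinuousOn (fun z : ℂ => z⁻¹) (sphere 0 r) := continuousOn_id.inv₀ hne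
    exact h0.smul (((analyticOnNhd_inverse_one_sub_smul hT).continuousOn.comp h0 hinv).clm_apply
      (hfr.continuousOn.mono sphere_subset_closedBall))
  have hφi : CircleIntegrable φ 0 r := hφc.circleIntegrable r.2
  have hφT : ∀ z ∈ sphere (0 : ℂ) r, z • φ z - T (φ z) = f z := by
    intro z hz
    have := inverse_one_sub_smul_right (hT _ (hinv hz)) (f z)
    simp only [hφ, smul_inv_smul₀ (hne z hz), map_smul]
    exact this
  have hps := hasFPowerSeriesOn_cauchy_integral hφi (zero_lt_one.trans hr1)
  refine ⟨(2 * Real.pi * Complex.I : ℂ)⁻¹ • ∮ z in C(0, r), φ z,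
    fun w => (2 * Real.pi * Complex.I : ℂ)⁻¹ • ∮ z in C(0, r), (z - w)⁻¹ • φ z, ?_, ?_⟩
  · refine hps.differentiableOn.mono fun z hz => ?_
    have hz' : ‖z‖ < r := lt_of_le_of_lt (by simpa using hz) hr1
    simpa [enorm] using hz'
  · intro w hw
    have hw' : ‖w‖ < r := lt_of_le_of_lt (by simpa using hw) hr1
    have hwr : w ∈ ball (0 : ℂ) r := by simpa using hw'
    have hzw : ∀ z ∈ sphere (0 : ℂ) r, z - w ≠ 0 := by
      intro z hz h0
      rw [sub_eq_zero.1 h0] at hz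
      exact hw'.ne (by simpa using hz)
    have hc : ContinuousOn (fun z : ℂ => (z - w)⁻¹) (sphere 0 r) :=
      (continuousOn_id.sub continuousOn_const).inv₀ hzw
    have hgi : CircleIntegrable (fun z => (z - w)⁻¹ • φ z) 0 r :=
      (hc.smul hφc).circleIntegrable r.2
    have hfi : CircleIntegrable (fun z => (z - w)⁻¹ • f z) 0 r :=
      (hc.smul (hfr.continuousOn.mono sphere_subset_closedBall)).circleIntegrable r.2
    have hcauchy := (hfr.mono
      closure_ball_subset_closedBall).diffContOnCl.two_pi_i_inv_smul_circleIntegral_sub_inv_smul hwr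
    rw [← hcauchy, map_smul, smul_comm w, ← smul_sub, ← smul_sub, T.map_circleIntegral hgi,
      ← circleIntegral.integral_smul, ← circleIntegral.integral_sub,
      ← circleIntegral.integral_sub hfi hφi]
    · congr 1
      refine circleIntegral.integral_congr r.2 fun z hz => ?_
      have e : φ z = (z - w)⁻¹ • (z - w) • φ z := (inv_smul_smul₀ (hzw z hz) _).symm
      have h1 := hφT z hz
      simp only [map_smul]
      rw [← h1]
      linear_combination (norm := module) e
    · exact (continuousOn_const.smul (hc.smul hφc)).circleIntegrable r.2
    · simp only [map_smul]
      exact (hc.smul (T.continuous.comp_continuousOn hφc)).circleIntegrable r.2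

theorem inverse_smul_one_sub {E : Type*} [NormedAddCommGroup E] [NormedSpace ℂ E]
    {T : E →L[ℂ] E} {z : ℂ} (hz : z ≠ 0) (h : IsUnit (1 - z⁻¹ • T)) :
    Ring.inverse (z • (1 : E →L[ℂ] E) - T) = z⁻¹ • Ring.inverse (1 - z⁻¹ • T) := by
  have e : z • (1 : E →L[ℂ] E) - T = z • (1 - z⁻¹ • T) := by
    rw [smul_sub, smul_inv_smul₀ hz]
  obtain ⟨u, hu⟩ := h
  rw [e, ← hu, ← Units.smul_mk0 hz]
  exact (Ring.inverse_unit (Units.mk0 z hz • u)).trans (by simp [Units.smul_def])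

theorem isUnit_one_sub_smul_compL {E F : Type*} [NormedAddCommGroup E] [NormedSpace ℂ E]
    [NormedAddCommGroup F] [NormedSpace ℂ F] {T : E →L[ℂ] E} {w : ℂ} (h : IsUnit (1 - w • T)) :
    IsUnit (1 - w • compL ℂ F E E T) := by
  refine isUnit_iff_exists.2 ⟨compL ℂ F E E (Ring.inverse (1 - w • T)), ?_, ?_⟩
  · ext A x
    simpa using inverse_one_sub_smul_right h (A x)
  · ext A x
    simpa using inverse_one_sub_smul_left h (A x)

theorem isUnit_one_sub_smul_compL_flip {E F : Type*} [NormedAddCommGroup E] [NormedSpace ℂ E]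
    [NormedAddCommGroup F] [NormedSpace ℂ F] {T : E →L[ℂ] E} {w : ℂ} (h : IsUnit (1 - w • T)) :
    IsUnit (1 - w • (compL ℂ E E F).flip T) := by
  refine isUnit_iff_exists.2 ⟨(compL ℂ E E F).flip (Ring.inverse (1 - w • T)), ?_, ?_⟩
  · ext A x
    simpa using congr(A $(inverse_one_sub_smul_left h x))
  · ext A x
    simpa using congr(A $(inverse_one_sub_smul_right h x))

theorem AnalyticOnNhd.clm_comp_clm {E F G : Type*} [NormedAddCommGroup E] [NormedSpace ℂ E]
    [NormedAddCommGroup F] [NormedSpace ℂ F] [NormedAddCommGroup G] [NormedSpace ℂ G]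
    {f : ℂ → F →L[ℂ] G} {g : ℂ → E →L[ℂ] F} {S : Set ℂ}
    (hf : AnalyticOnNhd ℂ f S) (hg : AnalyticOnNhd ℂ g S) :
    AnalyticOnNhd ℂ (fun z => f z ∘L g z) S := fun z hz =>
  ((compL ℂ E F G).analyticAt_bilinear (f z, g z)).comp₂ (hf z hz) (hg z hz)

theorem isUnit_one_sub_smul_sub_comp {E F : Type*} [NormedAddCommGroup E] [NormedSpace ℂ E]
    [NormedAddCommGroup F] [NormedSpace ℂ F] {T : E →L[ℂ] E} {B : F →L[ℂ] E} {C : E →L[ℂ] F}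
    {D : F →L[ℂ] F} {w : ℂ} (hT : IsUnit (1 - w • T)) (hD : IsUnit D)
    (h : IsUnit (D + w • (C ∘L Ring.inverse (1 - w • T) ∘L B))) :
    IsUnit (1 - w • (T - (B ∘L Ring.inverse D) ∘L C)) := by
  set A := Ring.inverse (1 - w • T) with hA
  have h1 : 1 - (-C) ∘L (w • (A ∘L B ∘L Ring.inverse D)) =
      (D + w • (C ∘L A ∘L B)) * Ring.inverse D := by
    rw [add_mul, Ring.mul_inverse_cancel _ hD]
    ext x
    simp
  have h2 := isUnit_one_sub_comp_swap (h1 ▸ h.mul hD.ringInverse)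
  have h3 : 1 - w • (T - (B ∘L Ring.inverse D) ∘L C) =
      (1 - w • T) * (1 - (w • (A ∘L B ∘L Ring.inverse D)) ∘L (-C)) := by
    ext x
    have := congr(w • $(inverse_one_sub_smul_right hT (B (Ring.inverse D (C x)))))
    simp [← hA] at this ⊢
    linear_combination (norm := module) -this
  rw [h3]
  exact hT.mul h2

theorem mem_closedBall_of_norm_eq_one {z : ℂ} (hz : ‖z‖ = 1) :
    z ∈ closedBall (0 : ℂ) 1 ∧ z⁻¹ ∈ closedBall (0 : ℂ) 1 ∧ z ≠ 0 :=
  ⟨by simp [hz], by simp [hz], norm_ne_zero_iff.1 (by simp [hz])⟩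

/-- Given a factorization `R(z) = V(z⁻¹) V₊(z)` on the unit circle, the function
`H = V₊⁻¹ Γ (1 - z α₊)⁻¹` is the symbol of the inverse Toeplitz operator of `R` applied to the
observability operator of `(γ₊, α₊)`; `Q` is its image under the controllability operator of
`(α₋, β₋)`. -/
theorem exists_toeplitz_solution {δ : U →L[ℂ] U} {γp : Xp →L[ℂ] U} {αp : Xp →L[ℂ] Xp}
    {βp : U →L[ℂ] Xp} {γm : Xm →L[ℂ] U} {αm : Xm →L[ℂ] Xm} {βm : U →L[ℂ] Xm}
    (hαp : ∀ w ∈ closedBall (0 : ℂ) 1, IsUnit (1 - w • αp))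
    (hαm : ∀ w ∈ closedBall (0 : ℂ) 1, IsUnit (1 - w • αm)) {Vh Vp : ℂ → U →L[ℂ] U}
    (hVh : AnalyticOnNhd ℂ Vh (closedBall 0 1)) (hVhu : ∀ z ∈ closedBall (0 : ℂ) 1, IsUnit (Vh z))
    (hW : AnalyticOnNhd ℂ (fun w => Ring.inverse (Vh w)) (closedBall 0 1))
    (hVpu : ∀ z ∈ closedBall (0 : ℂ) 1, IsUnit (Vp z))
    (hVpi : AnalyticOnNhd ℂ (fun w => Ring.inverse (Vp w)) (closedBall 0 1))
    (hR : ∀ z : ℂ, ‖z‖ = 1 → ∀ u, Vh z⁻¹ (Vp z u) =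
      δ u + z • γp (Ring.inverse (1 - z • αp) (βp u)) +
        z⁻¹ • γm (Ring.inverse (1 - z⁻¹ • αm) (βm u))) :
    ∃ (Γ : Xp →L[ℂ] U) (H : ℂ → Xp →L[ℂ] U) (Q : Xp →L[ℂ] Xm) (K : ℂ → Xp →L[ℂ] Xm),
      AnalyticOnNhd ℂ H (closedBall 0 1) ∧ DifferentiableOn ℂ K (closedBall 0 1) ∧
      (∀ z x, H z x = Ring.inverse (Vp z) (Γ (Ring.inverse (1 - z • αp) x))) ∧
      (∀ z ∈ closedBall (0 : ℂ) 1, ∀ x, z • K z x - αm (K z x) = βm (H z x) - Q x) ∧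
      (∀ z : ℂ, ‖z‖ = 1 → ∀ x, K z x = z⁻¹ • Ring.inverse (1 - z⁻¹ • αm) (βm (H z x)) -
        z⁻¹ • Ring.inverse (1 - z⁻¹ • αm) (Q x)) ∧
      ∀ z ∈ closedBall (0 : ℂ) 1, ∀ x, δ (H z x) +
        z • γp (Ring.inverse (1 - z • αp) (βp (H z x))) + γm (K z x) =
          γp (Ring.inverse (1 - z • αp) x) := by
  have hAp := analyticOnNhd_inverse_one_sub_smul hαp
  have hAm := analyticOnNhd_inverse_one_sub_smul hαm
  set W := fun w => Ring.inverse (Vh w) with hWdef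
  set Vi := fun w => Ring.inverse (Vp w) with hVidef
  set Ap := fun w : ℂ => Ring.inverse (1 - w • αp) with hApdef
  set Am := fun w : ℂ => Ring.inverse (1 - w • αm) with hAmdef
  have hApr : ∀ z ∈ closedBall (0 : ℂ) 1, ∀ x, Ap z x - z • αp (Ap z x) = x := fun z hz x =>
    inverse_one_sub_smul_right (hαp z hz) x
  have hAml : ∀ z ∈ closedBall (0 : ℂ) 1, ∀ x, Am z x - z • Am z (αm x) = x := fun z hz x =>
    inverse_one_sub_smul_left (hαm z hz) x
  have hVhW : ∀ z ∈ closedBall (0 : ℂ) 1, ∀ x, Vh z (W z x) = x := fun z hz x =>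
    congr($(Ring.mul_inverse_cancel _ (hVhu z hz)) x)
  have hVpVi : ∀ z ∈ closedBall (0 : ℂ) 1, ∀ x, Vp z (Vi z x) = x := fun z hz x =>
    congr($(Ring.mul_inverse_cancel _ (hVpu z hz)) x)
  obtain ⟨Γ, Y, hYd, hY⟩ := exists_division
    (fun w hw => isUnit_one_sub_smul_compL_flip (F := U) (hαp w hw))
    (hW.clm_comp_clm (analyticOnNhd_const (v := γp)))
  have hYx : ∀ w ∈ closedBall (0 : ℂ) 1, ∀ x,
      w • Y w x - Y w (αp x) = W w (γp x) - Γ x := fun w hw x => by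
    simpa using congr($(hY w hw) x)
  set H : ℂ → Xp →L[ℂ] U := fun z => (Vi z ∘L Γ) ∘L Ap z with hHdef
  have hH : AnalyticOnNhd ℂ H (closedBall 0 1) :=
    (hVpi.clm_comp_clm analyticOnNhd_const).clm_comp_clm hAp
  obtain ⟨Q, K, hKd, hK⟩ := exists_division
    (fun w hw => isUnit_one_sub_smul_compL (F := Xp) (hαm w hw))
    ((analyticOnNhd_const (v := βm)).clm_comp_clm hH)
  have hKx : ∀ z ∈ closedBall (0 : ℂ) 1, ∀ x,
      z • K z x - αm (K z x) = βm (H z x) - Q x := fun w hw x => by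
    simpa using congr($(hK w hw) x)
  have hAmd := hAm.differentiableOn
  have hApd := hAp.differentiableOn
  have hHd := hH.differentiableOn
  have hVhd := hVh.differentiableOn
  have hKc : ∀ z : ℂ, ‖z‖ = 1 → ∀ x,
      K z x = z⁻¹ • Am z⁻¹ (βm (H z x)) - z⁻¹ • Am z⁻¹ (Q x) := by
    intro z hz x
    obtain ⟨hz1, hw1, hz0⟩ := mem_closedBall_of_norm_eq_one hz
    have h1 := congr(z⁻¹ • Am z⁻¹ $(hKx z hz1 x))
    have h2 := hAml _ hw1 (K z x)
    simp only [map_sub, map_smul, smul_sub, inv_smul_smul₀ hz0] at h1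
    rw [← h1, h2]
  refine ⟨Γ, H, Q, K, hH, hKd, fun z x => rfl, hKx, hKc, ?_⟩
  have key := eqOn_closedBall_of_eq_inv_on_sphere
    (f := fun z => δ ∘L H z + z • (γp ∘L Ap z ∘L βp ∘L H z) + γm ∘L K z - γp ∘L Ap z)
    (g := fun w => -(w • (Vh w ∘L Y w)) - w • (γm ∘L Am w ∘L Q))
    (by fun_prop) (by fun_prop) ?_
  · intro z hz x
    have := congr($(key z hz) x)
    simpa [sub_eq_zero] using this
  · intro z hz
    obtain ⟨hz1, hw1, hz0⟩ := mem_closedBall_of_norm_eq_one hz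
    ext x
    have e1 := hR z hz (H z x)
    have e2 : Vp z (H z x) = Γ (Ap z x) := hVpVi z hz1 _
    have e3 := congr(Vh z⁻¹ $(hYx _ hw1 (Ap z x)))
    have e4 := congr(z⁻¹ • Vh z⁻¹ (Y z⁻¹ $(hApr z hz1 x)))
    have e5 := congr(γm $(hKc z hz x))
    rw [e2] at e1
    simp only [map_sub, map_smul, hVhW _ hw1, smul_sub, inv_smul_smul₀ hz0] at e3 e4 e5
    simp
    linear_combination (norm := module) e5 - e1 + e3 - e4

/-- Algebraic criterion for `Q` to be a stabilizing solution of (R1), where `H₀` plays the role of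
`(δ - γ₋ Q β₊)⁻¹ (γ₊ - γ₋ Q α₊)`. -/
theorem solvesR1_and_stabilizingR1_of_resolvent {δ : U →L[ℂ] U} {γp : Xp →L[ℂ] U}
    {αp : Xp →L[ℂ] Xp} {βp : U →L[ℂ] Xp} {γm : Xm →L[ℂ] U} {αm : Xm →L[ℂ] Xm}
    {βm : U →L[ℂ] Xm} {Q : Xp →L[ℂ] Xm} {H₀ : Xp →L[ℂ] U}
    (hαp : ∀ w ∈ closedBall (0 : ℂ) 1, IsUnit (1 - w • αp))
    (hαm : ∀ w ∈ closedBall (0 : ℂ) 1, IsUnit (1 - w • αm))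
    (hD : IsUnit (δ - (γm ∘L Q) ∘L βp))
    (hH₀ : ∀ x, δ (H₀ x) + γm (Q (αp x - βp (H₀ x))) = γp x)
    (hQ : ∀ x, Q x = αm (Q (αp x - βp (H₀ x))) + βm (H₀ x))
    (hp : ∀ z ∈ closedBall (0 : ℂ) 1, ∃ h : Xp →L[ℂ] U, IsUnit (1 - z • (h ∘L βp)) ∧
      ∀ x, h x - z • h (αp x - βp (H₀ x)) = H₀ x)
    (hm : ∀ w ∈ closedBall (0 : ℂ) 1, IsUnit ((δ - (γm ∘L Q) ∘L βp) +
      w • (γm ∘L Ring.inverse (1 - w • αm) ∘L (βm - (αm ∘L Q) ∘L βp)))) :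
    SolvesR1 δ γp αp βp γm αm βm Q ∧ StabilizingR1 δ γp αp βp γm αm βm Q := by
  have e : Ring.inverse (δ - (γm ∘L Q) ∘L βp) ∘L (γp - (γm ∘L Q) ∘L αp) = H₀ := by
    have : γp - (γm ∘L Q) ∘L αp = (δ - (γm ∘L Q) ∘L βp) ∘L H₀ := by
      ext x
      have := hH₀ x
      simp only [map_sub] at this
      simp
      linear_combination (norm := module) -this
    rw [this]
    ext x
    exact congr($(Ring.inverse_mul_cancel _ hD) (H₀ x))
  refine ⟨⟨hD, ?_⟩, ?_, ?_⟩
  · rw [comp_assoc (βm - (αm ∘L Q) ∘L βp), e]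
    ext x
    have := hQ x
    simp only [map_sub] at this
    simp
    linear_combination (norm := module) this
  · rw [alphaPcirc, comp_assoc βp, e, spectrum_subset_ball_iff]
    intro z hz
    obtain ⟨h, hu, hh⟩ := hp z hz
    obtain ⟨u, hu⟩ : IsUnit (1 - (z • βp) ∘L h) := isUnit_one_sub_comp_swap (by simpa using hu)
    have h2 : (1 - (z • βp) ∘L h) * (1 - z • (αp - βp ∘L H₀)) = 1 - z • αp := by
      ext x
      have := congr(z • βp $(hh x))
      simp only [map_sub, map_smul] at this
      simp
      linear_combination (norm := module) -this
    rw [← Units.isUnit_units_mul u, hu, h2]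
    exact hαp z hz
  · rw [spectrum_subset_ball_iff]
    intro w hw
    exact isUnit_one_sub_smul_sub_comp (hαm w hw) hD (hm w hw)

/-- If `R(z)` is invertible on an open annulus containing the unit circle and `R` admits
a right canonical Wiener–Hopf factorization, then there exists a stabilizing solution of
the Riccati equation (R1). -/
theorem exists_stabilizing_solution_of_rightCanonicalWH
    (δ : U →L[ℂ] U) (γp : Xp →L[ℂ] U) (αp : Xp →L[ℂ] Xp) (βp : U →L[ℂ] Xp)
    (γm : Xm →L[ℂ] U) (αm : Xm →L[ℂ] Xm) (βm : U →L[ℂ] Xm)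
    (hαp : spectrum ℂ αp ⊆ ball (0 : ℂ) 1) (hαm : spectrum ℂ αm ⊆ ball (0 : ℂ) 1)
    (r₁ r₂ : ℝ) (hr₁ : r₁ < 1) (hr₂ : 1 < r₂)
    (hRinv : ∀ z : ℂ, r₁ < ‖z‖ → ‖z‖ < r₂ → IsUnit (Rfun δ γp αp βp γm αm βm z))
    (hWH : RightCanonicalWH (Rfun δ γp αp βp γm αm βm)) :
    ∃ Q : Xp →L[ℂ] Xm,
      SolvesR1 δ γp αp βp γm αm βm Q ∧ StabilizingR1 δ γp αp βp γm αm βm Q := by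
  obtain ⟨Vm, Vp, ⟨Vh, ⟨S, -, hS, hVh, hVhu, hW⟩, hVm⟩, ⟨S', -, hS', hVp, hVpu, hVpi⟩, hfac⟩ := hWH
  replace hVh := hVh.mono hS
  replace hW := hW.mono hS
  replace hVp := hVp.mono hS'
  replace hVpi := hVpi.mono hS'
  replace hVhu := fun z hz => hVhu z (hS hz)
  replace hVpu := fun z hz => hVpu z (hS' hz)
  rw [spectrum_subset_ball_iff] at hαp hαm
  have hR : ∀ z : ℂ, ‖z‖ = 1 → ∀ u, Vh z⁻¹ (Vp z u) =
      δ u + z • γp (Ring.inverse (1 - z • αp) (βp u)) +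
        z⁻¹ • γm (Ring.inverse (1 - z⁻¹ • αm) (βm u)) := by
    intro z hz u
    obtain ⟨hz1, hw1, hz0⟩ := mem_closedBall_of_norm_eq_one hz
    have := congr($(hfac z hz) u)
    rw [hVm z hz.ge] at this
    simpa [Rfun, inverse_smul_one_sub hz0 (hαm _ hw1)] using this.symm
  obtain ⟨Γ, H, Q, K, hH, hKd, hHdef, hKx, hKc, hHK⟩ :=
    exists_toeplitz_solution hαp hαm hVh hVhu hW hVpu hVpi hR
  have hAmd := (analyticOnNhd_inverse_one_sub_smul hαm).differentiableOn
  have hHd := hH.differentiableOn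
  have hWd := hW.differentiableOn
  have hVpd := hVp.differentiableOn
  obtain ⟨W, hWdef⟩ : ∃ W, W = fun w => Ring.inverse (Vh w) := ⟨_, rfl⟩
  obtain ⟨Vi, hVidef⟩ : ∃ Vi, Vi = fun w => Ring.inverse (Vp w) := ⟨_, rfl⟩
  obtain ⟨Ap, hApdef⟩ : ∃ Ap, Ap = fun w : ℂ => Ring.inverse (1 - w • αp) := ⟨_, rfl⟩
  obtain ⟨Am, hAmdef⟩ : ∃ Am, Am = fun w : ℂ => Ring.inverse (1 - w • αm) := ⟨_, rfl⟩
  have hWz : ∀ z, Ring.inverse (Vh z) = W z := fun z => by rw [hWdef]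
  have hViz : ∀ z, Ring.inverse (Vp z) = Vi z := fun z => by rw [hVidef]
  have hApz : ∀ z : ℂ, Ring.inverse (1 - z • αp) = Ap z := fun z => by rw [hApdef]
  have hAmz : ∀ z : ℂ, Ring.inverse (1 - z • αm) = Am z := fun z => by rw [hAmdef]
  simp only [hWz, hViz, hApz, hAmz] at hR hHdef hKc hHK hAmd hWd
  have h0 : (0 : ℂ) ∈ closedBall (0 : ℂ) 1 := by simp
  have hAp0 : Ap 0 = 1 := by simp [hApdef]
  have hAm0 : Am 0 = 1 := by simp [hAmdef]
  have hApl : ∀ z ∈ closedBall (0 : ℂ) 1, ∀ x, Ap z x - z • Ap z (αp x) = x := fun z hz x =>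
    hApz z ▸ inverse_one_sub_smul_left (hαp z hz) x
  have hAml : ∀ z ∈ closedBall (0 : ℂ) 1, ∀ x, Am z x - z • Am z (αm x) = x := fun z hz x =>
    hAmz z ▸ inverse_one_sub_smul_left (hαm z hz) x
  have hVhW : ∀ z ∈ closedBall (0 : ℂ) 1, ∀ x, Vh z (W z x) = x := fun z hz x =>
    hWz z ▸ congr($(Ring.mul_inverse_cancel _ (hVhu z hz)) x)
  have hWVh : ∀ z ∈ closedBall (0 : ℂ) 1, ∀ x, W z (Vh z x) = x := fun z hz x =>
    hWz z ▸ congr($(Ring.inverse_mul_cancel _ (hVhu z hz)) x)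
  have hVpVi : ∀ z ∈ closedBall (0 : ℂ) 1, ∀ x, Vp z (Vi z x) = x := fun z hz x =>
    hViz z ▸ congr($(Ring.mul_inverse_cancel _ (hVpu z hz)) x)
  have hViVp : ∀ z ∈ closedBall (0 : ℂ) 1, ∀ x, Vi z (Vp z x) = x := fun z hz x =>
    hViz z ▸ congr($(Ring.inverse_mul_cancel _ (hVpu z hz)) x)
  have hRH : ∀ z : ℂ, ‖z‖ = 1 → ∀ x, Vh z⁻¹ (Vp z (H z x)) =
      γp (Ap z x) + z⁻¹ • γm (Am z⁻¹ (Q x)) := by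
    intro z hz x
    have e1 := hHK z (mem_closedBall_of_norm_eq_one hz).1 x
    have e2 := congr(γm $(hKc z hz x))
    simp only [map_sub, map_smul] at e2
    rw [hR z hz]
    linear_combination (norm := module) e1 - e2
  set D := δ - (γm ∘L Q) ∘L βp with hD
  set B := βm - (αm ∘L Q) ∘L βp with hB
  have hfd : DifferentiableOn ℂ (fun z => Vp z ∘L (1 - z • (H z ∘L βp))) (closedBall 0 1) := by
    fun_prop
  have hgd : DifferentiableOn ℂ (fun w => W w ∘L (D + w • (γm ∘L Am w ∘L B)))
      (closedBall 0 1) := by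
    fun_prop
  have hfg : ∀ z : ℂ, ‖z‖ = 1 → Vp z ∘L (1 - z • (H z ∘L βp)) =
      W z⁻¹ ∘L (D + z⁻¹ • (γm ∘L Am z⁻¹ ∘L B)) := by
    intro z hz
    obtain ⟨hz1, hw1, hz0⟩ := mem_closedBall_of_norm_eq_one hz
    ext u
    have e1 := hR z hz u
    have e2 := congr(z • $(hRH z hz (βp u)))
    have e3 := congr(γm $(hAml _ hw1 (Q (βp u))))
    have e4 := hWVh _ hw1 (Vp z (u - z • H z (βp u)))
    simp only [smul_add, smul_inv_smul₀ hz0, map_sub, map_smul] at e2 e3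
    have e5 : Vh z⁻¹ (Vp z (u - z • H z (βp u))) =
        (D + z⁻¹ • (γm ∘L Am z⁻¹ ∘L B)) u := by
      simp [hD, hB]
      linear_combination (norm := module) e1 - e2 - e3
    rw [e5] at e4
    simpa using e4.symm
  have hconst := eqOn_closedBall_of_eq_inv_on_sphere hfd hgd hfg
  have hconst' := eqOn_closedBall_of_eq_inv_on_sphere hgd hfd fun z hz => by
    simpa using (hfg z⁻¹ (by simp [hz])).symm
  have hone : Vp 0 ∘L 1 = Vp 0 := mul_one _
  have hg0 : W 0 ∘L D = Vp 0 := by simpa [hone] using (hconst 0 h0).symm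
  simp only [zero_smul, sub_zero, add_zero, hg0, hone] at hconst hconst'
  have hDu : IsUnit D := by
    have : D = Vh 0 * Vp 0 := by
      rw [← hg0]; ext u; exact (hVhW 0 h0 _).symm
    rw [this]
    exact (hVhu 0 h0).mul (hVpu 0 h0)
  have hM : ∀ w ∈ closedBall (0 : ℂ) 1, IsUnit (D + w • (γm ∘L Am w ∘L B)) := by
    intro w hw
    have : D + w • (γm ∘L Am w ∘L B) = Vh w * Vp 0 := by
      ext u
      have := congr(Vh w ($(hconst' w hw) u))
      simpa [hVhW w hw] using this
    rw [this]
    exact (hVhu w hw).mul (hVpu 0 h0)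
  have hN : ∀ z ∈ closedBall (0 : ℂ) 1, IsUnit (1 - z • (H z ∘L βp)) := by
    intro z hz
    have : 1 - z • (H z ∘L βp) = Vi z * Vp 0 := by
      ext u
      have := congr(Vi z ($(hconst z hz) u))
      simpa [hViVp z hz] using this
    rw [this]
    exact (hViz z ▸ (hVpu z hz).ringInverse).mul (hVpu 0 h0)
  set a := αp - βp ∘L H 0 with ha
  have hHa : ∀ z ∈ closedBall (0 : ℂ) 1, ∀ x, H z x - z • H z (a x) = H 0 x := by
    intro z hz x
    have e1 : Vp 0 (H 0 x) = Γ x := by simp [hHdef, hAp0, hVpVi 0 h0]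
    have e2 := congr(Vi z ($(hconst z hz) (H 0 x)))
    have e3 : H z x - z • H z (αp x) = Vi z (Γ x) := by
      simpa [hHdef] using congr(Vi z (Γ $(hApl z hz x)))
    simp [hViVp z hz, e1] at e2
    simp only [ha, sub_apply, comp_apply, map_sub]
    linear_combination (norm := module) e3 - e2
  have hK0 : ∀ x, K 0 x = Q (a x) := by
    have e0 : ∀ x, αm (K 0 x) = Q x - βm (H 0 x) := fun x => by
      have := hKx 0 h0 x
      simp at this
      linear_combination (norm := module) -this
    have key := eqOn_closedBall_of_eq_inv_on_sphere
      (f := fun z => K z ∘L (1 - z • a) - K 0) (g := fun w => Am w ∘L (Q ∘L a - K 0))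
      (by fun_prop) (by fun_prop) ?_ 0 h0
    · intro x
      have := congr($key x)
      simp [hAm0] at this
      exact (sub_eq_zero.1 this.symm).symm
    · intro z hz
      obtain ⟨hz1, hw1, hz0⟩ := mem_closedBall_of_norm_eq_one hz
      ext x
      have e1 := hKc z hz x
      have e2 := congr(z • $(hKc z hz (a x)))
      have e3 := congr(z⁻¹ • Am z⁻¹ (βm $(hHa z hz1 x)))
      have e4 := hAml _ hw1 (K 0 x)
      rw [e0] at e4
      simp only [map_sub, map_smul, smul_sub, inv_smul_smul₀ hz0, smul_inv_smul₀ hz0] at e2 e3 e4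
      simp
      linear_combination (norm := module) e1 - e2 + e3 + e4
  refine ⟨Q, solvesR1_and_stabilizingR1_of_resolvent (H₀ := H 0) hαp hαm hDu ?_ ?_ ?_ ?_⟩
  · intro x
    simpa [hAp0, hK0, ha] using hHK 0 h0 x
  · intro x
    have := hKx 0 h0 x
    simp only [zero_smul, hK0] at this
    change Q x = αm (Q (a x)) + βm (H 0 x)
    linear_combination (norm := module) this
  · exact fun z hz => ⟨H z, hN z hz, hHa z hz⟩
  · intro w hw
    rw [hAmz]
    exact hM w hw
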